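/- arXiv:1210.1342 — 2 statements merged into one kernel-verified Lean document; each statement's English description precedes it below -/
import Mathlib

section
/- Let α, β ≥ -1/2. There exists a constant C depending only on α and β such that for all θ, φ ∈ (0,π) with θ ≠ φ one has ∬_{[-1,1]²} dΠ_α(u) dΠ_β(v) / q(θ,φ,u,v)^{α+β+2} ≤ C / ( |θ-φ| · μ_{α,β}^+(B(θ, |θ-φ|)) ). -/
open MeasureTheory Real Set

noncomputable section

/-- The Jacobi measure `μ_{α,β}^+` on `(0,π)`: density
`(sin(θ/2))^(2α+1) (cos(θ/2))^(2β+1)` w.r.t. Lebesgue measure on `(0,π)`. -/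
def jacobiMeasure (α β : ℝ) : Measure ℝ :=
  (volume.restrict (Ioo 0 π)).withDensity
    (fun θ => ENNReal.ofReal (Real.sin (θ / 2) ^ (2 * α + 1) * Real.cos (θ / 2) ^ (2 * β + 1)))

/-- The ball `B(θ,r) = (θ-r, θ+r) ∩ (0,π)`. -/
def jacobiBall (θ r : ℝ) : Set ℝ := Ioo (θ - r) (θ + r) ∩ Ioo 0 π

/-- The measure `Π_α` on `[-1,1]`. -/
def PiMeasure (α : ℝ) : Measure ℝ :=
  if α = -(1 / 2) then (2 : ENNReal)⁻¹ • (Measure.dirac (-1) + Measure.dirac 1)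
  else
    (volume.restrict (Icc (-1) 1)).withDensity
      (fun u => ENNReal.ofReal
        (Real.Gamma (α + 1) / (Real.sqrt π * Real.Gamma (α + 1 / 2)) * (1 - u ^ 2) ^ (α - 1 / 2)))

/-- `q(θ,φ,u,v) = 1 - u sin(θ/2) sin(φ/2) - v cos(θ/2) cos(φ/2)`. -/
def qfun (θ φ u v : ℝ) : ℝ :=
  1 - u * Real.sin (θ / 2) * Real.sin (φ / 2) - v * Real.cos (θ / 2) * Real.cos (φ / 2)

/-- `Ψ^{α,β}(t,s) = sinh(t/2) / (cosh(t/2) - 1 + s)^(α+β+2)`. -/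
def Psi (α β t s : ℝ) : ℝ :=
  Real.sinh (t / 2) / (Real.cosh (t / 2) - 1 + s) ^ (α + β + 2)

/-- The Jacobi-Poisson kernel `H_t^{α,β}(θ,φ)`. -/
def Hker (α β t θ φ : ℝ) : ℝ :=
  ((2 : ℝ) ^ (-(α + β + 2)) / (jacobiMeasure α β (Ioo 0 π)).toReal) * Real.sinh (t / 2) *
    ∫ u, ∫ v, 1 / (Real.cosh (t / 2) - 1 + qfun θ φ u v) ^ (α + β + 2)
      ∂(PiMeasure β) ∂(PiMeasure α)

/-- The symmetrized kernel `H̃_t^{α,β}(θ,φ) = (1/4) sin θ sin φ H_t^{α+1,β+1}(θ,φ)`. -/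
def Htilde (α β t θ φ : ℝ) : ℝ :=
  (1 / 4) * Real.sin θ * Real.sin φ * Hker (α + 1) (β + 1) t θ φ

end

/-!
All bounds are in terms of `q` at the corners: with `D = q(θ,φ,1,1)`, `a = sin(θ/2) sin(φ/2)` and
`b = cos(θ/2) cos(φ/2)` one has `q(θ,φ,u,v) = D + a(1-u) + b(1-v)`, `q(θ,φ,0,1) = D + a` and
`q(θ,φ,1,0) = D + b`. The measure `Π_α` has the size of `(1-u)^(α-1/2) du` near `u = 1`, where an
increasing integrand is largest, and `x^(s-1) (A + ax)^(-s-1)` has an elementary primitive; one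
integration in each variable bounds the double integral by a multiple of
`D⁻¹ (D + a)^(-α-1/2) (D + b)^(-β-1/2)`. On the other hand `D = 1 - cos((θ-φ)/2)` is comparable to
`|θ-φ|²`, so for `t` in `B(θ,|θ-φ|)` the Lipschitz continuity of sine and cosine bounds
`sin²(t/2)` and `cos²(t/2)` by multiples of `D + a` and `D + b`; hence `μ(B(θ,|θ-φ|))` is at most a
multiple of `|θ-φ| (D + a)^(α+1/2) (D + b)^(β+1/2)`, and in the product of `|θ-φ|`, this bound and
the previous one only `|θ-φ|² / D` survives.
-/

/-! ### Integrals over intervals -/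

lemma setLIntegral_Icc_ofReal_deriv {f f' : ℝ → ℝ} {a b : ℝ} (hab : a ≤ b)
    (hcont : ContinuousOn f (Icc a b)) (hderiv : ∀ x ∈ Ioo a b, HasDerivAt f (f' x) x)
    (hf' : ∀ x ∈ Ioo a b, 0 ≤ f' x) :
    ∫⁻ x in Icc a b, ENNReal.ofReal (f' x) = ENNReal.ofReal (f b - f a) := by
  have hint : IntegrableOn f' (Ioc a b) :=
    intervalIntegral.integrableOn_deriv_of_nonneg hcont hderiv hf'
  have hFTC : ∫ x in Ioc a b, f' x = f b - f a := by
    rw [← intervalIntegral.integral_of_le hab]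
    exact intervalIntegral.integral_eq_sub_of_hasDerivAt_of_le hab hcont hderiv
      ((intervalIntegrable_iff_integrableOn_Ioc_of_le hab).2 hint)
  have hnonneg : 0 ≤ᵐ[volume.restrict (Ioc a b)] f' := by
    rw [← restrict_Ioo_eq_restrict_Ioc]
    exact (ae_restrict_mem measurableSet_Ioo).mono hf'
  rw [setLIntegral_congr Ioc_ae_eq_Icc.symm, ← ofReal_integral_eq_lintegral_ofReal hint hnonneg,
    hFTC]

lemma hasDerivAt_div_add_mul_rpow {s A a x : ℝ} (hs : s ≠ 0) (hA : A ≠ 0) (hx : 0 < x)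
    (hAx : 0 < A + a * x) :
    HasDerivAt (fun x => (x / (A + a * x)) ^ s / (A * s))
      (x ^ (s - 1) * (A + a * x) ^ (-(s + 1))) x := by
  have hlin : HasDerivAt (fun x => A + a * x) a x := by
    simpa using ((hasDerivAt_id x).const_mul a).const_add A
  have hquot : HasDerivAt (fun x => x / (A + a * x)) (A / (A + a * x) ^ 2) x :=
    ((hasDerivAt_id x).div hlin hAx.ne').congr_deriv (by simp only [id]; ring)
  refine ((hquot.rpow_const (p := s) (Or.inl (by positivity))).div_const _).congr_deriv ?_
  have hexp : (A + a * x) ^ (-(s + 1)) = ((A + a * x) ^ (s - 1))⁻¹ * ((A + a * x) ^ 2)⁻¹ := by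
    rw [← Real.rpow_neg hAx.le, ← Real.rpow_natCast, ← Real.rpow_neg hAx.le,
      ← Real.rpow_add hAx]
    congr 1
    push_cast
    ring
  rw [hexp, Real.div_rpow hx.le hAx.le]
  field_simp

lemma setLIntegral_rpow_mul_add_mul_rpow {s A a R : ℝ} (hs : 0 < s) (hA : 0 < A) (ha : 0 ≤ a)
    (hR : 0 ≤ R) :
    ∫⁻ x in Icc 0 R, ENNReal.ofReal (x ^ (s - 1) * (A + a * x) ^ (-(s + 1))) =
      ENNReal.ofReal ((R / (A + a * R)) ^ s / (A * s)) := by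
  have hpos {x : ℝ} (hx : 0 ≤ x) : 0 < A + a * x := by positivity
  have hcont : ContinuousOn (fun x => (x / (A + a * x)) ^ s / (A * s)) (Icc 0 R) :=
    ((continuousOn_id.div (by fun_prop) fun x hx => (hpos hx.1).ne').rpow_const
      fun _ _ => Or.inr hs.le).div_const _
  rw [setLIntegral_Icc_ofReal_deriv hR hcont
    (fun x hx => hasDerivAt_div_add_mul_rpow hs.ne' hA.ne' hx.1 (hpos hx.1.le))
    fun x hx => mul_nonneg (rpow_nonneg hx.1.le _) (rpow_nonneg (hpos hx.1.le).le _)]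
  simp [Real.zero_rpow hs.ne']

lemma setLIntegral_Icc_neg_le_two_mul {w g : ℝ → ENNReal} {r : ℝ} (hw : Function.Even w)
    (hg : MonotoneOn g (Icc (-r) r)) :
    ∫⁻ u in Icc (-r) r, w u * g u ≤ 2 * ∫⁻ u in Icc 0 r, w u * g u := by
  have hreflect : ∫⁻ u in Icc (-r) 0, w (-u) * g (-u) = ∫⁻ u in Icc 0 r, w u * g u := by
    simpa using (Measure.measurePreserving_neg (volume : Measure ℝ)).setLIntegral_comp_preimage_emb
      (MeasurableEquiv.neg ℝ).measurableEmbedding (fun u => w u * g u) (Icc 0 r)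
  have hneg : ∫⁻ u in Icc (-r) 0, w u * g u ≤ ∫⁻ u in Icc 0 r, w u * g u := by
    rw [← hreflect]
    refine setLIntegral_mono' measurableSet_Icc fun u hu => ?_
    rw [hw u]
    gcongr
    exact hg ⟨hu.1, by linarith [hu.1, hu.2]⟩ ⟨by linarith [hu.1, hu.2], by linarith [hu.1]⟩
      (by linarith [hu.2])
  calc ∫⁻ u in Icc (-r) r, w u * g u
      ≤ (∫⁻ u in Icc (-r) 0, w u * g u) + ∫⁻ u in Icc 0 r, w u * g u :=
        (lintegral_mono_set Icc_subset_Icc_union_Icc).trans (lintegral_union_le _ _ _)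
    _ ≤ 2 * ∫⁻ u in Icc 0 r, w u * g u := by rw [two_mul]; gcongr

lemma setLIntegral_Icc_comp_sub_left (f : ℝ → ENNReal) (a : ℝ) :
    ∫⁻ x in Icc 0 a, f (a - x) = ∫⁻ x in Icc 0 a, f x := by
  simpa using
    (Measure.measurePreserving_sub_left (volume : Measure ℝ) a).setLIntegral_comp_preimage_emb
      (Homeomorph.subLeft a).measurableEmbedding f (Icc 0 a)

/-! ### The measures `Π_ν` -/

lemma ae_mem_Icc_PiMeasure (ν : ℝ) : ∀ᵐ u ∂(PiMeasure ν), u ∈ Icc (-1 : ℝ) 1 := by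
  unfold PiMeasure
  split_ifs with hν
  · refine Measure.ae_smul_measure (ae_add_measure_iff.2 ⟨?_, ?_⟩) _
    all_goals exact (ae_dirac_iff measurableSet_Icc).2 (by norm_num)
  · exact (withDensity_absolutelyContinuous _ _).ae_le (ae_restrict_mem measurableSet_Icc)

lemma lintegral_PiMeasure_neg_half_le {F : ℝ → ENNReal} (hF : AntitoneOn F (Icc 0 2)) :
    ∫⁻ u, F (1 - u) ∂(PiMeasure (-(1 / 2))) ≤ F 0 := by
  have hF₂ : F 2 ≤ F 0 := hF (by norm_num) (by norm_num) (by norm_num)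
  rw [PiMeasure, if_pos rfl, lintegral_smul_measure, lintegral_add_measure, lintegral_dirac,
    lintegral_dirac, sub_neg_eq_add, one_add_one_eq_two, sub_self, smul_eq_mul]
  calc (2 : ENNReal)⁻¹ * (F 2 + F 0) ≤ 2⁻¹ * (F 0 + F 0) := by gcongr
    _ = F 0 := by
      rw [← two_mul, ← mul_assoc, ENNReal.inv_mul_cancel (by simp) (by simp), one_mul]

lemma one_sub_one_sub_sq_rpow_le {p x : ℝ} (hp : -1 ≤ p) (hx₀ : 0 ≤ x) (hx₁ : x ≤ 1) :
    (1 - (1 - x) ^ 2) ^ p ≤ 2 ^ (p + 1) * x ^ p := by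
  have hfactor : (2 - x) ^ p ≤ 2 ^ (p + 1) :=
    calc (2 - x) ^ p ≤ (2 - x) ^ (p + 1) :=
          rpow_le_rpow_of_exponent_le (by linarith) (by linarith)
      _ ≤ 2 ^ (p + 1) := rpow_le_rpow (by linarith) (by linarith) (by linarith)
  rw [show 1 - (1 - x) ^ 2 = (2 - x) * x by ring, mul_rpow (by linarith) hx₀]
  gcongr

lemma exists_lintegral_PiMeasure_le_of_antitoneOn {ν : ℝ} (hν : -(1 / 2) < ν) :
    ∃ C : ℝ, 0 < C ∧ ∀ F : ℝ → ENNReal, AntitoneOn F (Icc 0 2) →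
      ∫⁻ u, F (1 - u) ∂(PiMeasure ν) ≤
        ENNReal.ofReal C * ∫⁻ x in Icc 0 1, ENNReal.ofReal (x ^ (ν - 1 / 2)) * F x := by
  set c := Real.Gamma (ν + 1) / (√π * Real.Gamma (ν + 1 / 2))
  have hc₀ : 0 < c := by
    have := Real.Gamma_pos_of_pos (show 0 < ν + 1 by linarith)
    have := Real.Gamma_pos_of_pos (show 0 < ν + 1 / 2 by linarith)
    positivity
  set w : ℝ → ENNReal := fun u => ENNReal.ofReal (c * (1 - u ^ 2) ^ (ν - 1 / 2)) with hw
  have hw_even : Function.Even w := fun u => by simp only [hw, neg_sq]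
  set K := c * 2 ^ (ν - 1 / 2 + 1) with hK
  have hw_le {x : ℝ} (hx : x ∈ Icc (0 : ℝ) 1) :
      w (1 - x) ≤ ENNReal.ofReal K * ENNReal.ofReal (x ^ (ν - 1 / 2)) := by
    rw [← ENNReal.ofReal_mul (by positivity), hK, mul_assoc]
    refine ENNReal.ofReal_le_ofReal ?_
    gcongr
    exact one_sub_one_sub_sq_rpow_le (by linarith) hx.1 hx.2
  refine ⟨2 * K, by positivity, fun F hF => ?_⟩
  have hmono : MonotoneOn (fun u => F (1 - u)) (Icc (-1) 1) := fun u hu v hv huv =>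
    hF ⟨by linarith [hv.2], by linarith [hv.1]⟩ ⟨by linarith [hu.2], by linarith [hu.1]⟩
      (by linarith)
  calc ∫⁻ u, F (1 - u) ∂(PiMeasure ν)
      ≤ ∫⁻ u in Icc (-1) 1, w u * F (1 - u) := by
        rw [PiMeasure, if_neg hν.ne']
        exact lintegral_withDensity_le_lintegral_mul _ (by fun_prop) _
    _ ≤ 2 * ∫⁻ u in Icc 0 1, w u * F (1 - u) := setLIntegral_Icc_neg_le_two_mul hw_even hmono
    _ = 2 * ∫⁻ x in Icc 0 1, w (1 - x) * F x := by
        rw [← setLIntegral_Icc_comp_sub_left]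
        simp only [sub_sub_cancel]
    _ ≤ 2 * ∫⁻ x in Icc 0 1, ENNReal.ofReal K * (ENNReal.ofReal (x ^ (ν - 1 / 2)) * F x) := by
        gcongr 2 * ?_
        refine setLIntegral_mono' measurableSet_Icc fun x hx => ?_
        rw [← mul_assoc]
        gcongr
        exact hw_le hx
    _ = ENNReal.ofReal (2 * K) *
          ∫⁻ x in Icc 0 1, ENNReal.ofReal (x ^ (ν - 1 / 2)) * F x := by
        rw [lintegral_const_mul' _ _ ENNReal.ofReal_ne_top, ENNReal.ofReal_mul zero_le_two,
          ENNReal.ofReal_ofNat, mul_assoc]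

lemma exists_lintegral_rpow_neg_PiMeasure_le {ν : ℝ} (hν : -(1 / 2) ≤ ν) :
    ∃ C : ℝ, 0 < C ∧ ∀ A a : ℝ, 0 < A → 0 ≤ a →
      ∫⁻ u, ENNReal.ofReal ((A + a * (1 - u)) ^ (-(ν + 3 / 2))) ∂(PiMeasure ν) ≤
        ENNReal.ofReal (C * (A⁻¹ * (A + a) ^ (-(ν + 1 / 2)))) := by
  have hanti {A a : ℝ} (hA : 0 < A) (ha : 0 ≤ a) :
      AntitoneOn (fun x => ENNReal.ofReal ((A + a * x) ^ (-(ν + 3 / 2)))) (Icc 0 2) := by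
    intro x hx y _ hxy
    have hAx : 0 < A + a * x := by nlinarith [mul_nonneg ha hx.1]
    exact ENNReal.ofReal_le_ofReal
      (rpow_le_rpow_of_nonpos hAx (by gcongr) (by linarith))
  rcases hν.eq_or_lt with rfl | hν
  · refine ⟨1, one_pos, fun A a hA ha => ?_⟩
    refine (lintegral_PiMeasure_neg_half_le (hanti hA ha)).trans_eq ?_
    norm_num [rpow_neg_one]
  · obtain ⟨C, hC, hle⟩ := exists_lintegral_PiMeasure_le_of_antitoneOn hν
    have hs : 0 < ν + 1 / 2 := by linarith
    refine ⟨C / (ν + 1 / 2), by positivity, fun A a hA ha => ?_⟩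
    have hintegrand : ∀ x ∈ Icc (0 : ℝ) 1,
        ENNReal.ofReal (x ^ (ν - 1 / 2)) * ENNReal.ofReal ((A + a * x) ^ (-(ν + 3 / 2))) =
          ENNReal.ofReal (x ^ (ν + 1 / 2 - 1) * (A + a * x) ^ (-(ν + 1 / 2 + 1))) := fun x hx => by
      rw [← ENNReal.ofReal_mul (rpow_nonneg hx.1 _)]
      ring_nf
    refine (hle _ (hanti hA ha)).trans_eq ?_
    rw [setLIntegral_congr_fun measurableSet_Icc hintegrand,
      setLIntegral_rpow_mul_add_mul_rpow hs hA ha zero_le_one, ← ENNReal.ofReal_mul hC.le,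
      mul_one, one_div, inv_rpow (by positivity), ← rpow_neg (by positivity)]
    congr 1
    field_simp

lemma exists_lintegral_rpow_neg_add_PiMeasure_le {ν : ℝ} (hν : -(1 / 2) ≤ ν) :
    ∃ C : ℝ, 0 < C ∧ ∀ p A a : ℝ, 0 ≤ p → 0 < A → 0 ≤ a →
      ∫⁻ u, ENNReal.ofReal ((A + a * (1 - u)) ^ (-(p + (ν + 3 / 2)))) ∂(PiMeasure ν) ≤
        ENNReal.ofReal (C * (A ^ (-(p + 1)) * (A + a) ^ (-(ν + 1 / 2)))) := by
  obtain ⟨C, hC, hle⟩ := exists_lintegral_rpow_neg_PiMeasure_le hν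
  refine ⟨C, hC, fun p A a hp hA ha => ?_⟩
  calc ∫⁻ u, ENNReal.ofReal ((A + a * (1 - u)) ^ (-(p + (ν + 3 / 2)))) ∂(PiMeasure ν)
      ≤ ∫⁻ u, ENNReal.ofReal (A ^ (-p)) *
          ENNReal.ofReal ((A + a * (1 - u)) ^ (-(ν + 3 / 2))) ∂(PiMeasure ν) := by
        refine lintegral_mono_ae ((ae_mem_Icc_PiMeasure ν).mono fun u hu => ?_)
        have hA_le : A ≤ A + a * (1 - u) := by nlinarith [hu.2]
        have hpos : 0 < A + a * (1 - u) := hA.trans_le hA_le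
        rw [← ENNReal.ofReal_mul (by positivity), neg_add, rpow_add hpos]
        refine ENNReal.ofReal_le_ofReal ?_
        gcongr ?_ * _
        exact rpow_le_rpow_of_nonpos hA hA_le (by linarith)
    _ ≤ ENNReal.ofReal (A ^ (-p)) *
          ENNReal.ofReal (C * (A⁻¹ * (A + a) ^ (-(ν + 1 / 2)))) := by
        rw [lintegral_const_mul' _ _ ENNReal.ofReal_ne_top]
        gcongr
        exact hle A a hA ha
    _ = ENNReal.ofReal (C * (A ^ (-(p + 1)) * (A + a) ^ (-(ν + 1 / 2)))) := by
        rw [← ENNReal.ofReal_mul (by positivity), neg_add p, rpow_add hA, rpow_neg_one]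
        ring_nf

lemma exists_lintegral_lintegral_rpow_neg_PiMeasure_le {α β : ℝ} (hα : -(1 / 2) ≤ α)
    (hβ : -(1 / 2) ≤ β) :
    ∃ C : ℝ, 0 < C ∧ ∀ D a b : ℝ, 0 < D → 0 ≤ a → 0 ≤ b →
      ∫⁻ u, ∫⁻ v, ENNReal.ofReal ((D + a * (1 - u) + b * (1 - v)) ^ (-(α + β + 2)))
          ∂(PiMeasure β) ∂(PiMeasure α) ≤
        ENNReal.ofReal (C * (D⁻¹ * (D + a) ^ (-(α + 1 / 2)) * (D + b) ^ (-(β + 1 / 2)))) := by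
  obtain ⟨C₁, hC₁, hle₁⟩ := exists_lintegral_rpow_neg_PiMeasure_le hα
  obtain ⟨C₂, hC₂, hle₂⟩ := exists_lintegral_rpow_neg_add_PiMeasure_le hβ
  refine ⟨C₁ * C₂, by positivity, fun D a b hD ha hb => ?_⟩
  set K := C₂ * (D + b) ^ (-(β + 1 / 2)) with hK
  have hinner : ∀ u ∈ Icc (-1 : ℝ) 1,
      ∫⁻ v, ENNReal.ofReal ((D + a * (1 - u) + b * (1 - v)) ^ (-(α + β + 2))) ∂(PiMeasure β) ≤
        ENNReal.ofReal K * ENNReal.ofReal ((D + a * (1 - u)) ^ (-(α + 3 / 2))) := by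
    intro u hu
    have hD_le : D ≤ D + a * (1 - u) := by nlinarith [hu.2]
    have hpos : 0 < D + a * (1 - u) := hD.trans_le hD_le
    rw [show α + β + 2 = α + 1 / 2 + (β + 3 / 2) by ring,
      ← ENNReal.ofReal_mul (by positivity)]
    refine (hle₂ (α + 1 / 2) _ b (by linarith) hpos hb).trans (ENNReal.ofReal_le_ofReal ?_)
    rw [show α + 1 / 2 + 1 = α + 3 / 2 by ring, hK, mul_right_comm, mul_assoc]
    gcongr C₂ * (_ * ?_)
    exact rpow_le_rpow_of_nonpos (by positivity) (by gcongr) (by linarith)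
  calc ∫⁻ u, ∫⁻ v, ENNReal.ofReal ((D + a * (1 - u) + b * (1 - v)) ^ (-(α + β + 2)))
          ∂(PiMeasure β) ∂(PiMeasure α)
      ≤ ∫⁻ u, ENNReal.ofReal K * ENNReal.ofReal ((D + a * (1 - u)) ^ (-(α + 3 / 2)))
          ∂(PiMeasure α) :=
        lintegral_mono_ae ((ae_mem_Icc_PiMeasure α).mono hinner)
    _ ≤ ENNReal.ofReal K * ENNReal.ofReal (C₁ * (D⁻¹ * (D + a) ^ (-(α + 1 / 2)))) := by
        rw [lintegral_const_mul' _ _ ENNReal.ofReal_ne_top]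
        gcongr
        exact hle₁ D a hD ha
    _ = ENNReal.ofReal
          (C₁ * C₂ * (D⁻¹ * (D + a) ^ (-(α + 1 / 2)) * (D + b) ^ (-(β + 1 / 2)))) := by
        rw [← ENNReal.ofReal_mul (by positivity), hK]
        ring_nf

/-! ### The function `q` -/

lemma sin_half_nonneg {t : ℝ} (ht : t ∈ Icc 0 π) : 0 ≤ Real.sin (t / 2) :=
  sin_nonneg_of_nonneg_of_le_pi (by linarith [ht.1]) (by linarith [ht.2, pi_pos])

lemma cos_half_nonneg {t : ℝ} (ht : t ∈ Icc 0 π) : 0 ≤ Real.cos (t / 2) :=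
  cos_nonneg_of_mem_Icc ⟨by linarith [ht.1, pi_pos], by linarith [ht.2]⟩

lemma sq_le_five_mul_one_sub_cos {x : ℝ} (hx : |x| ≤ π) : x ^ 2 ≤ 5 * (1 - Real.cos x) := by
  have hcos : 2 / π ^ 2 * x ^ 2 ≤ 1 - Real.cos x := by linarith [cos_le_one_sub_mul_cos_sq hx]
  have hπ : 1 / 5 ≤ 2 / π ^ 2 := by
    rw [div_le_div_iff₀ (by norm_num) (by positivity)]
    nlinarith [pi_lt_d2, pi_pos]
  nlinarith [sq_nonneg x]

lemma qfun_one_one (θ φ : ℝ) : qfun θ φ 1 1 = 1 - Real.cos ((θ - φ) / 2) := by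
  rw [qfun, sub_div, Real.cos_sub]
  ring

lemma sq_sub_le_twenty_mul_qfun {θ φ : ℝ} (hθ : θ ∈ Icc 0 π) (hφ : φ ∈ Icc 0 π) :
    (θ - φ) ^ 2 ≤ 20 * qfun θ φ 1 1 := by
  have habs : |(θ - φ) / 2| ≤ π :=
    abs_le.2 ⟨by linarith [hθ.1, hφ.2, pi_pos], by linarith [hθ.2, hφ.1, pi_pos]⟩
  rw [qfun_one_one]
  linarith [sq_le_five_mul_one_sub_cos habs]

lemma qfun_eq_qfun_one_one_add (θ φ u v : ℝ) :
    qfun θ φ u v = qfun θ φ 1 1 + Real.sin (θ / 2) * Real.sin (φ / 2) * (1 - u) +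
      Real.cos (θ / 2) * Real.cos (φ / 2) * (1 - v) := by
  rw [qfun, qfun]
  ring

lemma qfun_pos {θ φ u v : ℝ} (hθ : θ ∈ Icc 0 π) (hφ : φ ∈ Icc 0 π) (hne : θ ≠ φ) (hu : u ≤ 1)
    (hv : v ≤ 1) : 0 < qfun θ φ u v := by
  have hsq : 0 < (θ - φ) ^ 2 := sq_pos_of_ne_zero (sub_ne_zero.2 hne)
  have hsin := mul_nonneg (sin_half_nonneg hθ) (sin_half_nonneg hφ)
  have hcos := mul_nonneg (cos_half_nonneg hθ) (cos_half_nonneg hφ)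
  rw [qfun_eq_qfun_one_one_add]
  linarith [sq_sub_le_twenty_mul_qfun hθ hφ, mul_nonneg hsin (sub_nonneg.2 hu),
    mul_nonneg hcos (sub_nonneg.2 hv)]

lemma exists_lintegral_lintegral_qfun_le {α β : ℝ} (hα : -(1 / 2) ≤ α) (hβ : -(1 / 2) ≤ β) :
    ∃ C : ℝ, 0 < C ∧ ∀ θ ∈ Icc 0 π, ∀ φ ∈ Icc 0 π, θ ≠ φ →
      ∫⁻ u, ∫⁻ v, ENNReal.ofReal (1 / qfun θ φ u v ^ (α + β + 2))
          ∂(PiMeasure β) ∂(PiMeasure α) ≤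
        ENNReal.ofReal (C * ((qfun θ φ 1 1)⁻¹ * qfun θ φ 0 1 ^ (-(α + 1 / 2)) *
          qfun θ φ 1 0 ^ (-(β + 1 / 2)))) := by
  obtain ⟨C, hC, hle⟩ := exists_lintegral_lintegral_rpow_neg_PiMeasure_le hα hβ
  refine ⟨C, hC, fun θ hθ φ hφ hne => ?_⟩
  have hcorner := hle _ _ _ (qfun_pos hθ hφ hne le_rfl le_rfl)
    (mul_nonneg (sin_half_nonneg hθ) (sin_half_nonneg hφ))
    (mul_nonneg (cos_half_nonneg hθ) (cos_half_nonneg hφ))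
  rw [qfun_eq_qfun_one_one_add θ φ 0 1, qfun_eq_qfun_one_one_add θ φ 1 0]
  simp only [sub_self, sub_zero, mul_zero, mul_one, add_zero]
  refine le_of_eq_of_le (lintegral_congr_ae ?_) hcorner
  filter_upwards [ae_mem_Icc_PiMeasure α] with u hu
  refine lintegral_congr_ae ?_
  filter_upwards [ae_mem_Icc_PiMeasure β] with v hv
  rw [← qfun_eq_qfun_one_one_add, one_div, rpow_neg (qfun_pos hθ hφ hne hu.2 hv.2).le]

/-! ### The Jacobi measure of a ball -/

lemma rpow_two_mul_le_rpow_of_sq_le {x P p : ℝ} (hx : 0 ≤ x) (hp : 0 ≤ p) (h : x ^ 2 ≤ P) :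
    x ^ (2 * p) ≤ P ^ p := by
  rw [rpow_mul hx, rpow_two]
  exact rpow_le_rpow (sq_nonneg x) h hp

lemma jacobiMeasure_le {α β : ℝ} (hα : -(1 / 2) ≤ α) (hβ : -(1 / 2) ≤ β) {s : Set ℝ}
    (hs : MeasurableSet s) {P Q : ℝ} (hP : ∀ t ∈ s ∩ Ioo 0 π, Real.sin (t / 2) ^ 2 ≤ P)
    (hQ : ∀ t ∈ s ∩ Ioo 0 π, Real.cos (t / 2) ^ 2 ≤ Q) :
    jacobiMeasure α β s ≤ ENNReal.ofReal (P ^ (α + 1 / 2) * Q ^ (β + 1 / 2)) * volume s := by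
  rw [jacobiMeasure, withDensity_apply _ hs, Measure.restrict_restrict hs]
  calc ∫⁻ t in s ∩ Ioo 0 π,
        ENNReal.ofReal (Real.sin (t / 2) ^ (2 * α + 1) * Real.cos (t / 2) ^ (2 * β + 1))
      ≤ ∫⁻ _ in s ∩ Ioo 0 π, ENNReal.ofReal (P ^ (α + 1 / 2) * Q ^ (β + 1 / 2)) := by
        refine setLIntegral_mono' (hs.inter measurableSet_Ioo) fun t ht => ?_
        have hsin := sin_half_nonneg (Ioo_subset_Icc_self ht.2)
        have hcos := cos_half_nonneg (Ioo_subset_Icc_self ht.2)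
        have hP₀ : 0 ≤ P := (sq_nonneg _).trans (hP t ht)
        rw [show 2 * α + 1 = 2 * (α + 1 / 2) by ring, show 2 * β + 1 = 2 * (β + 1 / 2) by ring]
        gcongr
        · exact rpow_two_mul_le_rpow_of_sq_le hsin (by linarith) (hP t ht)
        · exact rpow_two_mul_le_rpow_of_sq_le hcos (by linarith) (hQ t ht)
    _ = ENNReal.ofReal (P ^ (α + 1 / 2) * Q ^ (β + 1 / 2)) * volume (s ∩ Ioo 0 π) :=
        setLIntegral_const _ _
    _ ≤ ENNReal.ofReal (P ^ (α + 1 / 2) * Q ^ (β + 1 / 2)) * volume s := by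
        gcongr
        exact inter_subset_left

lemma measurableSet_jacobiBall (θ r : ℝ) : MeasurableSet (jacobiBall θ r) :=
  measurableSet_Ioo.inter measurableSet_Ioo

lemma volume_jacobiBall_le (θ r : ℝ) : volume (jacobiBall θ r) ≤ ENNReal.ofReal (2 * r) :=
  (measure_mono inter_subset_left).trans_eq (by rw [Real.volume_Ioo]; ring_nf)

lemma sq_le_four_mul_mul_add_of_lipschitzWith {X : Type*} [PseudoMetricSpace X]
    {K : NNReal} {f : X → ℝ} (hf : LipschitzWith K f) {x y z : X} (hx : 0 ≤ f x) (hz : 0 ≤ f z)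
    (hdist : dist z x ≤ dist x y) :
    f z ^ 2 ≤ 4 * (f x * f y) + 4 * (K * dist x y) ^ 2 := by
  set e := K * dist x y with he
  have hzx : f z ≤ f x + e :=
    calc f z ≤ f x + K * dist z x := hf.le_add_mul z x
      _ ≤ f x + e := by rw [he]; gcongr
  have hxy : f x ≤ f y + e := hf.le_add_mul x y
  have hmul : f x * f x ≤ f x * (f y + e) := by gcongr
  calc f z ^ 2 ≤ (f x + e) ^ 2 := by gcongr
    _ ≤ 4 * (f x * f y) + 4 * e ^ 2 := by linarith [sq_nonneg (f x - e)]

lemma sq_le_twenty_mul_of_mem_jacobiBall {f : ℝ → ℝ} (hf : LipschitzWith 1 f) {θ φ t : ℝ}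
    (hθ : θ ∈ Icc 0 π) (hφ : φ ∈ Icc 0 π) (ht : t ∈ jacobiBall θ |θ - φ|)
    (hfθ : 0 ≤ f (θ / 2)) (hfφ : 0 ≤ f (φ / 2)) (hft : 0 ≤ f (t / 2)) :
    f (t / 2) ^ 2 ≤ 20 * (qfun θ φ 1 1 + f (θ / 2) * f (φ / 2)) := by
  have hdist_half (x y : ℝ) : dist (x / 2) (y / 2) = |x - y| / 2 := by
    rw [dist_eq, ← sub_div, abs_div, abs_two]
  have hdist : dist (t / 2) (θ / 2) ≤ dist (θ / 2) (φ / 2) := by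
    have ht_abs : |t - θ| ≤ |θ - φ| := abs_le.2 ⟨by linarith [ht.1.1], by linarith [ht.1.2]⟩
    rw [hdist_half, hdist_half]
    exact div_le_div_of_nonneg_right ht_abs zero_le_two
  have hlip := sq_le_four_mul_mul_add_of_lipschitzWith hf hfθ hft hdist
  rw [hdist_half, NNReal.coe_one, one_mul, div_pow, sq_abs] at hlip
  linarith [sq_sub_le_twenty_mul_qfun hθ hφ, mul_nonneg hfθ hfφ]

lemma jacobiMeasure_jacobiBall_le {α β : ℝ} (hα : -(1 / 2) ≤ α) (hβ : -(1 / 2) ≤ β) {θ φ : ℝ}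
    (hθ : θ ∈ Icc 0 π) (hφ : φ ∈ Icc 0 π) :
    jacobiMeasure α β (jacobiBall θ |θ - φ|) ≤
      ENNReal.ofReal ((20 * qfun θ φ 0 1) ^ (α + 1 / 2) * (20 * qfun θ φ 1 0) ^ (β + 1 / 2)) *
        ENNReal.ofReal (2 * |θ - φ|) := by
  refine (jacobiMeasure_le hα hβ (measurableSet_jacobiBall _ _) (fun t ht => ?_)
    fun t ht => ?_).trans (mul_le_mul_right (volume_jacobiBall_le _ _) _)
  · refine (sq_le_twenty_mul_of_mem_jacobiBall lipschitzWith_sin hθ hφ ht.1 (sin_half_nonneg hθ)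
      (sin_half_nonneg hφ) (sin_half_nonneg (Ioo_subset_Icc_self ht.2))).trans_eq ?_
    simp only [qfun]
    ring
  · refine (sq_le_twenty_mul_of_mem_jacobiBall lipschitzWith_cos hθ hφ ht.1 (cos_half_nonneg hθ)
      (cos_half_nonneg hφ) (cos_half_nonneg (Ioo_subset_Icc_self ht.2))).trans_eq ?_
    simp only [qfun]
    ring

lemma rpow_neg_mul_mul_rpow {x k : ℝ} (hx : 0 < x) (hk : 0 ≤ k) (p : ℝ) :
    x ^ (-p) * (k * x) ^ p = k ^ p := by
  rw [mul_rpow hk hx.le, mul_left_comm, ← rpow_add hx, neg_add_cancel, rpow_zero, mul_one]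

lemma inv_mul_rpow_neg_mul_mul_rpow_le {D E F δ k : ℝ} (hD : 0 < D) (hE : 0 < E) (hF : 0 < F)
    (hk : 0 ≤ k) (hδ : δ ^ 2 ≤ k * D) (p r : ℝ) :
    D⁻¹ * E ^ (-p) * F ^ (-r) * (δ * ((k * E) ^ p * (k * F) ^ r * (2 * δ))) ≤
      2 * k * k ^ p * k ^ r :=
  calc D⁻¹ * E ^ (-p) * F ^ (-r) * (δ * ((k * E) ^ p * (k * F) ^ r * (2 * δ)))
      = 2 * (δ ^ 2 / D) * (E ^ (-p) * (k * E) ^ p) * (F ^ (-r) * (k * F) ^ r) := by ring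
    _ = 2 * (δ ^ 2 / D) * k ^ p * k ^ r := by
      rw [rpow_neg_mul_mul_rpow hE hk, rpow_neg_mul_mul_rpow hF hk]
    _ ≤ 2 * k * k ^ p * k ^ r := by
      gcongr
      exact (div_le_iff₀ hD).2 hδ

/-- second estimate of Lemma 4.3 in [NoSjogren]. -/
theorem double_integral_q_bound_two (α β : ℝ) (hα : -(1 / 2) ≤ α) (hβ : -(1 / 2) ≤ β) :
    ∃ C : ℝ, 0 < C ∧
      ∀ θ ∈ Ioo (0 : ℝ) π, ∀ φ ∈ Ioo (0 : ℝ) π, θ ≠ φ →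
        (∫⁻ u, ∫⁻ v, ENNReal.ofReal (1 / qfun θ φ u v ^ (α + β + 2))
            ∂(PiMeasure β) ∂(PiMeasure α))
          ≤ ENNReal.ofReal C /
              (ENNReal.ofReal |θ - φ| * jacobiMeasure α β (jacobiBall θ |θ - φ|)) := by
  obtain ⟨C, hC, hint⟩ := exists_lintegral_lintegral_qfun_le hα hβ
  refine ⟨C * (2 * 20 * 20 ^ (α + 1 / 2) * 20 ^ (β + 1 / 2)), by positivity,
    fun θ hθ φ hφ hne => ?_⟩
  replace hθ := Ioo_subset_Icc_self hθ
  replace hφ := Ioo_subset_Icc_self hφ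
  have hq₁₁ : 0 < qfun θ φ 1 1 := qfun_pos hθ hφ hne le_rfl le_rfl
  have hq₀₁ : 0 < qfun θ φ 0 1 := qfun_pos hθ hφ hne zero_le_one le_rfl
  have hq₁₀ : 0 < qfun θ φ 1 0 := qfun_pos hθ hφ hne le_rfl zero_le_one
  have hdist : |θ - φ| ^ 2 ≤ 20 * qfun θ φ 1 1 := by
    rw [sq_abs]
    exact sq_sub_le_twenty_mul_qfun hθ hφ
  rw [ENNReal.le_div_iff_mul_le (Or.inr (ENNReal.ofReal_pos.2 (by positivity)).ne')
    (Or.inr ENNReal.ofReal_ne_top)]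
  refine (mul_le_mul' (hint θ hθ φ hφ hne)
    (mul_le_mul' le_rfl (jacobiMeasure_jacobiBall_le hα hβ hθ hφ))).trans ?_
  rw [← ENNReal.ofReal_mul (by positivity), ← ENNReal.ofReal_mul (by positivity),
    ← ENNReal.ofReal_mul (by positivity), mul_assoc C]
  refine ENNReal.ofReal_le_ofReal (mul_le_mul_of_nonneg_left ?_ hC.le)
  exact inv_mul_rpow_neg_mul_mul_rpow_le hq₁₁ hq₀₁ hq₁₀ (by norm_num) hdist _ _
end

section
/- Let α, β ≥ -1/2 and γ₁, γ₂, κ, κ₁, κ₂ ≥ 0. There exists a constant C depending only on these parameters such that for all θ, φ ∈ (0,π) with θ ≠ φ one has (sin(θ/2)+sin(φ/2))^{2γ₁} (cos(θ/2)+cos(φ/2))^{2γ₂} ∬_{[-1,1]²} dΠ_{α+γ₁+κ+κ₁}(u) dΠ_{β+γ₂+κ+κ₂}(v) / q(θ,φ,u,v)^{α+β+2+γ₁+γ₂+κ} ≤ C / ( |θ-φ| · μ_{α,β}^+(B(θ, |θ-φ|)) ). -/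
open MeasureTheory Real Set

/-!
Put `d = q(θ,φ,1,1) = 1 - cos ((θ-φ)/2)`, `x = sin (θ/2) sin (φ/2)` and `y = cos (θ/2) cos (φ/2)`,
so that `q(θ,φ,u,v) = d + (1-u) x + (1-v) y` and `d + x + y = 1`. Since `Π_ν` has density of order
`(1-u)^(ν-1/2)` near `u = 1`, for `0 ≤ l ≤ ν + 1/2` and `l < p`
`∫ (D + (1-u) x)^(-p) dΠ_ν(u) ≲ (D+x)^(-l) D^(-(p-l))`.
Using this in `v` and then in `u` bounds the double integral by
`(d+x)^(-(α+γ₁+1/2)) (d+y)^(-(β+γ₂+1/2)) d⁻¹`; the exponent `κ` costs nothing because `d + x` or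
`d + y` is at least `1/2`. It remains to compare: with `S = sin (θ/2) + sin (φ/2)` and
`T = cos (θ/2) + cos (φ/2)` one has `S² ≲ d + x`, `T² ≲ d + y`, `|θ-φ|² ≲ d`, while the ball has
measure at most a constant times `S^(2α+1) T^(2β+1) |θ-φ|`.
-/

lemma setLIntegral_Ioc_rpow_sub_one {l T : ℝ} (hl : 0 < l) (hT : 0 ≤ T) :
    ∫⁻ t in Ioc 0 T, ENNReal.ofReal (t ^ (l - 1)) = ENNReal.ofReal (T ^ l / l) := by
  have hint : IntegrableOn (fun t : ℝ => t ^ (l - 1)) (Ioc 0 T) :=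
    (intervalIntegrable_iff_integrableOn_Ioc_of_le hT).1
      (intervalIntegral.intervalIntegrable_rpow' (by linarith))
  have hnonneg : 0 ≤ᵐ[volume.restrict (Ioc 0 T)] fun t : ℝ => t ^ (l - 1) :=
    ae_restrict_of_forall_mem measurableSet_Ioc fun t ht => rpow_nonneg ht.1.le _
  rw [← ofReal_integral_eq_lintegral_ofReal hint hnonneg,
    ← intervalIntegral.integral_of_le hT, integral_rpow (Or.inl (by linarith)), sub_add_cancel,
    zero_rpow hl.ne', sub_zero]

lemma setLIntegral_Ioi_rpow_neg_sub_one {a T : ℝ} (ha : 0 < a) (hT : 0 < T) :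
    ∫⁻ t in Ioi T, ENNReal.ofReal (t ^ (-a - 1)) = ENNReal.ofReal (T ^ (-a) / a) := by
  have hint : IntegrableOn (fun t : ℝ => t ^ (-a - 1)) (Ioi T) :=
    integrableOn_Ioi_rpow_of_lt (by linarith) hT
  have hnonneg : 0 ≤ᵐ[volume.restrict (Ioi T)] fun t : ℝ => t ^ (-a - 1) :=
    ae_restrict_of_forall_mem measurableSet_Ioi fun t ht => rpow_nonneg (hT.trans ht).le _
  rw [← ofReal_integral_eq_lintegral_ofReal hint hnonneg,
    integral_Ioi_rpow_of_lt (by linarith) hT, sub_add_cancel, neg_div_neg_eq]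

lemma setLIntegral_Ioi_rpow_div_add_mul_rpow_le {l p D Y : ℝ} (hl : 0 < l) (hlp : l < p)
    (hD : 0 < D) (hY : 0 < Y) :
    ∫⁻ t in Ioi 0, ENNReal.ofReal (t ^ (l - 1) * (1 / (D + t * Y) ^ p)) ≤
      ENNReal.ofReal ((1 / l + 1 / (p - l)) * (Y ^ (-l) * D ^ (-(p - l)))) := by
  have hp : 0 ≤ p := (hl.trans hlp).le
  have hpl : 0 < p - l := sub_pos.2 hlp
  -- The two terms of the denominator balance at `T`.
  set T : ℝ := D / Y with hTdef
  have hT : 0 < T := div_pos hD hY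
  have hT_rpow (e : ℝ) : T ^ e = D ^ e * Y ^ (-e) := by
    rw [hTdef, div_rpow hD.le hY.le, rpow_neg hY.le, div_eq_mul_inv]
  have near_zero : ∫⁻ t in Ioc 0 T, ENNReal.ofReal (t ^ (l - 1) * (1 / (D + t * Y) ^ p)) ≤
      ENNReal.ofReal (1 / l * (Y ^ (-l) * D ^ (-(p - l)))) := by
    calc _ ≤ ∫⁻ t in Ioc 0 T, ENNReal.ofReal (D ^ (-p)) * ENNReal.ofReal (t ^ (l - 1)) := by
          refine setLIntegral_mono' measurableSet_Ioc fun t ⟨ht, _⟩ => ?_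
          rw [← ENNReal.ofReal_mul (by positivity), mul_comm, rpow_neg hD.le, ← one_div]
          have : D ≤ D + t * Y := le_add_of_nonneg_right (by positivity)
          gcongr
      _ = ENNReal.ofReal (D ^ (-p) * (T ^ l / l)) := by
          rw [lintegral_const_mul _ (by fun_prop), setLIntegral_Ioc_rpow_sub_one hl hT.le,
            ← ENNReal.ofReal_mul (by positivity)]
      _ = _ := by
          rw [hT_rpow, show -(p - l) = -p + l by ring, rpow_add hD]
          ring_nf
  have near_infty : ∫⁻ t in Ioi T, ENNReal.ofReal (t ^ (l - 1) * (1 / (D + t * Y) ^ p)) ≤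
      ENNReal.ofReal (1 / (p - l) * (Y ^ (-l) * D ^ (-(p - l)))) := by
    calc _ ≤ ∫⁻ t in Ioi T, ENNReal.ofReal (Y ^ (-p)) * ENNReal.ofReal (t ^ (-(p - l) - 1)) := by
          refine setLIntegral_mono' measurableSet_Ioi fun t hTt => ?_
          have ht : 0 < t := hT.trans hTt
          rw [← ENNReal.ofReal_mul (by positivity)]
          have hsplit : Y ^ (-p) * t ^ (-(p - l) - 1) = t ^ (l - 1) * (1 / (t * Y) ^ p) := by
            rw [show -(p - l) - 1 = l - 1 + -p by ring, rpow_add ht, rpow_neg ht.le,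
              rpow_neg hY.le, mul_rpow ht.le hY.le]
            ring
          have : t * Y ≤ D + t * Y := le_add_of_nonneg_left hD.le
          rw [hsplit]
          gcongr
      _ = ENNReal.ofReal (Y ^ (-p) * (T ^ (-(p - l)) / (p - l))) := by
          rw [lintegral_const_mul _ (by fun_prop), setLIntegral_Ioi_rpow_neg_sub_one hpl hT,
            ← ENNReal.ofReal_mul (by positivity)]
      _ = _ := by
          rw [hT_rpow, show -l = -p + - -(p - l) by ring, rpow_add hY]
          ring_nf
  rw [← Ioc_union_Ioi_eq_Ioi hT.le]
  refine (lintegral_union_le _ _ _).trans ((add_le_add near_zero near_infty).trans_eq ?_)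
  rw [← ENNReal.ofReal_add (by positivity) (by positivity), ← add_mul]

lemma mul_rpow_le_two_rpow_abs_mul {t w : ℝ} (ht : 0 ≤ t) (hw : w ∈ Icc 1 2) (e : ℝ) :
    (t * w) ^ e ≤ 2 ^ |e| * t ^ e := by
  have hw₀ : 0 ≤ w := zero_le_one.trans hw.1
  calc (t * w) ^ e = w ^ e * t ^ e := by rw [mul_rpow ht hw₀, mul_comm]
    _ ≤ w ^ |e| * t ^ e := by gcongr; exacts [hw.1, le_abs_self e]
    _ ≤ 2 ^ |e| * t ^ e := by gcongr; exact hw.2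

lemma ae_mem_Icc_piMeasure (ν : ℝ) : ∀ᵐ u ∂PiMeasure ν, u ∈ Icc (-1) 1 := by
  rw [PiMeasure]
  split_ifs
  · apply Measure.ae_smul_measure
    simp [ae_add_measure_iff]
  · exact (withDensity_absolutelyContinuous _ _).ae_le (ae_restrict_mem measurableSet_Icc)

lemma lintegral_piMeasure_of_ne {ν : ℝ} (hν : ν ≠ -(1 / 2)) {f : ℝ → ENNReal} (hf : Measurable f) :
    ∫⁻ u, f u ∂PiMeasure ν = ∫⁻ u in Ioo (-1) 1, ENNReal.ofReal
      (Gamma (ν + 1) / (√π * Gamma (ν + 1 / 2)) * (1 - u ^ 2) ^ (ν - 1 / 2)) * f u := by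
  rw [PiMeasure, if_neg hν, lintegral_withDensity_eq_lintegral_mul _ (by fun_prop) hf,
    ← restrict_Ioo_eq_restrict_Icc]
  rfl

/-- The symmetry of the density lets the singularity at `u = -1` be absorbed into the one at
`u = 1`, where `f` is larger. -/
lemma exists_lintegral_piMeasure_le_of_monotoneOn {ν : ℝ} (hν : -(1 / 2) < ν) :
    ∃ C : ℝ, 0 < C ∧ ∀ f : ℝ → ENNReal, Measurable f → MonotoneOn f (Ioo (-1) 1) →
      ∫⁻ u, f u ∂PiMeasure ν ≤ ENNReal.ofReal C *
        ∫⁻ t in Ioc 0 1, ENNReal.ofReal (t ^ (ν - 1 / 2)) * f (1 - t) := by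
  set G : ℝ := Gamma (ν + 1) / (√π * Gamma (ν + 1 / 2))
  have hG : 0 < G := by
    have := Gamma_pos_of_pos (show 0 < ν + 1 by linarith)
    have := Gamma_pos_of_pos (show 0 < ν + 1 / 2 by linarith)
    positivity
  set K : ℝ := G * 2 ^ |ν - 1 / 2|
  have hK : 0 < K := by positivity
  refine ⟨2 * K, by positivity, fun f hf hmono => ?_⟩
  set F : ℝ → ENNReal :=
    (Ioc 0 1).indicator fun t => ENNReal.ofReal (t ^ (ν - 1 / 2)) * f (1 - t)
  have hF : Measurable F := Measurable.indicator (by fun_prop) measurableSet_Ioc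
  have le_of_nonneg {u : ℝ} (hu : u ∈ Ico 0 1) :
      ENNReal.ofReal (G * (1 - u ^ 2) ^ (ν - 1 / 2)) * f u ≤ ENNReal.ofReal K * F (1 - u) := by
    have hmem : 1 - u ∈ Ioc (0 : ℝ) 1 := ⟨by linarith [hu.2], by linarith [hu.1]⟩
    rw [show F (1 - u) = _ from indicator_of_mem hmem _, sub_sub_cancel, ← mul_assoc,
      ← ENNReal.ofReal_mul hK.le, mul_assoc, show 1 - u ^ 2 = (1 - u) * (1 + u) by ring]
    gcongr
    exact mul_rpow_le_two_rpow_abs_mul hmem.1.le ⟨by linarith [hu.1], by linarith [hu.2]⟩ _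
  calc ∫⁻ u, f u ∂PiMeasure ν
      = ∫⁻ u in Ioo (-1) 1, ENNReal.ofReal (G * (1 - u ^ 2) ^ (ν - 1 / 2)) * f u :=
        lintegral_piMeasure_of_ne hν.ne' hf
    _ ≤ ∫⁻ u in Ioo (-1) 1, ENNReal.ofReal K * (F (1 - u) + F (1 + u)) := by
        refine setLIntegral_mono' measurableSet_Ioo fun u hu => ?_
        rw [mul_add]
        rcases le_total 0 u with h | h
        · exact (le_of_nonneg ⟨h, hu.2⟩).trans le_self_add
        · refine le_trans ?_ le_add_self
          have hreflect := le_of_nonneg (u := -u) ⟨by linarith, by linarith [hu.1]⟩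
          rw [neg_sq, sub_neg_eq_add] at hreflect
          refine le_trans ?_ hreflect
          gcongr
          exact hmono hu ⟨by linarith [hu.2], by linarith [hu.1]⟩ (by linarith)
    _ ≤ ∫⁻ u, ENNReal.ofReal K * (F (1 - u) + F (1 + u)) := setLIntegral_le_lintegral _ _
    _ = ENNReal.ofReal (2 * K) * ∫⁻ t, F t := by
        rw [lintegral_const_mul _ (by fun_prop), lintegral_add_left (by fun_prop),
          lintegral_sub_left_eq_self F 1, lintegral_add_left_eq_self F 1, ← two_mul,
          ENNReal.ofReal_mul zero_le_two, ENNReal.ofReal_ofNat]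
        ring
    _ = _ := by rw [lintegral_indicator measurableSet_Ioc]

lemma piMeasure_univ_ne_top {ν : ℝ} (hν : -(1 / 2) ≤ ν) : PiMeasure ν univ ≠ ⊤ := by
  rcases hν.eq_or_lt with rfl | hν
  · simp [PiMeasure]
  · obtain ⟨C, -, hC⟩ := exists_lintegral_piMeasure_le_of_monotoneOn hν
    have hle := hC (fun _ => 1) measurable_const monotoneOn_const
    simp only [lintegral_one, mul_one, show ν - 1 / 2 = ν + 1 / 2 - 1 by ring] at hle
    rw [setLIntegral_Ioc_rpow_sub_one (by linarith) zero_le_one] at hle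
    exact ne_top_of_le_ne_top (by finiteness) hle

lemma exists_lintegral_piMeasure_one_div_rpow_le_of_pos {ν l p : ℝ} (hl : 0 < l)
    (hlν : l ≤ ν + 1 / 2) (hlp : l < p) :
    ∃ C : ℝ, 0 < C ∧ ∀ D x : ℝ, 0 < D → 0 ≤ x →
      ∫⁻ u, ENNReal.ofReal (1 / (D + (1 - u) * x) ^ p) ∂PiMeasure ν ≤
        ENNReal.ofReal (C * ((D + x) ^ (-l) * D ^ (-(p - l)))) := by
  have hp : 0 < p := hl.trans hlp
  have : 0 < p - l := sub_pos.2 hlp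
  obtain ⟨C, hC, hfold⟩ := exists_lintegral_piMeasure_le_of_monotoneOn (ν := ν) (by linarith)
  refine ⟨C * (2 ^ p * (1 / l + 1 / (p - l))), by positivity, fun D x hD hx => ?_⟩
  have hmono : MonotoneOn (fun u => ENNReal.ofReal (1 / (D + (1 - u) * x) ^ p)) (Ioo (-1) 1) := by
    intro u _ v hv huv
    have : 0 ≤ 1 - v := by linarith [hv.2]
    dsimp only
    gcongr
  have hpointwise {t : ℝ} (ht : t ∈ Ioc 0 1) :
      ENNReal.ofReal (t ^ (ν - 1 / 2)) * ENNReal.ofReal (1 / (D + (1 - (1 - t)) * x) ^ p) ≤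
        ENNReal.ofReal (2 ^ p) * ENNReal.ofReal (t ^ (l - 1) * (1 / (D + t * (D + x)) ^ p)) := by
    obtain ⟨ht₀, ht₁⟩ := ht
    have hbase : (D + t * (D + x)) / 2 ≤ D + t * x := by
      linarith [mul_le_of_le_one_left hD.le ht₁, mul_nonneg ht₀.le hx]
    have hpow : t ^ (ν - 1 / 2) ≤ t ^ (l - 1) :=
      rpow_le_rpow_of_exponent_ge ht₀ ht₁ (by linarith)
    rw [sub_sub_cancel, ← ENNReal.ofReal_mul (by positivity), ← ENNReal.ofReal_mul (by positivity)]
    refine ENNReal.ofReal_le_ofReal ?_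
    calc t ^ (ν - 1 / 2) * (1 / (D + t * x) ^ p)
        ≤ t ^ (l - 1) * (1 / ((D + t * (D + x)) / 2) ^ p) := by gcongr
      _ = 2 ^ p * (t ^ (l - 1) * (1 / (D + t * (D + x)) ^ p)) := by
          rw [div_rpow (by positivity) zero_le_two]
          field_simp
  calc ∫⁻ u, ENNReal.ofReal (1 / (D + (1 - u) * x) ^ p) ∂PiMeasure ν
      ≤ ENNReal.ofReal C * ∫⁻ t in Ioc 0 1, ENNReal.ofReal (2 ^ p) *
          ENNReal.ofReal (t ^ (l - 1) * (1 / (D + t * (D + x)) ^ p)) := by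
        refine (hfold _ (by fun_prop) hmono).trans ?_
        gcongr 1
        exact setLIntegral_mono' measurableSet_Ioc fun t ht => hpointwise ht
    _ ≤ ENNReal.ofReal C * (ENNReal.ofReal (2 ^ p) *
          ENNReal.ofReal ((1 / l + 1 / (p - l)) * ((D + x) ^ (-l) * D ^ (-(p - l))))) := by
        rw [lintegral_const_mul _ (by fun_prop)]
        gcongr
        exact (lintegral_mono_set Ioc_subset_Ioi_self).trans
          (setLIntegral_Ioi_rpow_div_add_mul_rpow_le hl hlp hD (by positivity))
    _ = _ := by
        rw [← ENNReal.ofReal_mul (by positivity), ← ENNReal.ofReal_mul hC.le]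
        ring_nf

lemma exists_lintegral_piMeasure_one_div_rpow_le {ν l p : ℝ} (hl : 0 ≤ l) (hlν : l ≤ ν + 1 / 2)
    (hlp : l < p) :
    ∃ C : ℝ, 0 < C ∧ ∀ D x : ℝ, 0 < D → 0 ≤ x →
      ∫⁻ u, ENNReal.ofReal (1 / (D + (1 - u) * x) ^ p) ∂PiMeasure ν ≤
        ENNReal.ofReal (C * ((D + x) ^ (-l) * D ^ (-(p - l)))) := by
  rcases hl.eq_or_lt with rfl | hl
  · have hfin : PiMeasure ν univ ≠ ⊤ := piMeasure_univ_ne_top (by linarith)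
    refine ⟨(PiMeasure ν univ).toReal + 1, by positivity, fun D x hD hx => ?_⟩
    calc ∫⁻ u, ENNReal.ofReal (1 / (D + (1 - u) * x) ^ p) ∂PiMeasure ν
        ≤ ∫⁻ _, ENNReal.ofReal (D ^ (-p)) ∂PiMeasure ν := by
          refine lintegral_mono_ae ?_
          filter_upwards [ae_mem_Icc_piMeasure ν] with u hu
          have : D ≤ D + (1 - u) * x :=
            le_add_of_nonneg_right (mul_nonneg (sub_nonneg.2 hu.2) hx)
          rw [rpow_neg hD.le, ← one_div]
          gcongr
      _ = ENNReal.ofReal ((PiMeasure ν univ).toReal * D ^ (-p)) := by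
          rw [lintegral_const, ENNReal.ofReal_mul ENNReal.toReal_nonneg,
            ENNReal.ofReal_toReal hfin, mul_comm]
      _ ≤ _ := by
          rw [neg_zero, rpow_zero, one_mul, sub_zero]
          gcongr
          exact le_add_of_nonneg_right zero_le_one
  · exact exists_lintegral_piMeasure_one_div_rpow_le_of_pos hl hlν hlp

lemma exists_lintegral_lintegral_piMeasure_one_div_rpow_le {ν₁ ν₂ l₁ l₂ p : ℝ} (hl₁ : 0 ≤ l₁)
    (hl₂ : 0 ≤ l₂) (hlν₁ : l₁ ≤ ν₁ + 1 / 2) (hlν₂ : l₂ ≤ ν₂ + 1 / 2) (hp : l₁ + l₂ < p) :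
    ∃ C : ℝ, 0 < C ∧ ∀ d x y : ℝ, 0 < d → 0 ≤ x → 0 ≤ y →
      ∫⁻ u, ∫⁻ v, ENNReal.ofReal (1 / (d + (1 - u) * x + (1 - v) * y) ^ p)
          ∂PiMeasure ν₂ ∂PiMeasure ν₁ ≤
        ENNReal.ofReal (C * ((d + x) ^ (-l₁) * (d + y) ^ (-l₂) * d ^ (-(p - l₁ - l₂)))) := by
  obtain ⟨C₂, hC₂, hinner⟩ :=
    exists_lintegral_piMeasure_one_div_rpow_le (p := p) hl₂ hlν₂ (by linarith)
  obtain ⟨C₁, hC₁, houter⟩ :=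
    exists_lintegral_piMeasure_one_div_rpow_le (p := p - l₂) hl₁ hlν₁ (by linarith)
  refine ⟨C₂ * C₁, by positivity, fun d x y hd hx hy => ?_⟩
  calc _ ≤ ∫⁻ u, ENNReal.ofReal (C₂ * (d + y) ^ (-l₂)) *
          ENNReal.ofReal (1 / (d + (1 - u) * x) ^ (p - l₂)) ∂PiMeasure ν₁ := by
        refine lintegral_mono_ae ?_
        filter_upwards [ae_mem_Icc_piMeasure ν₁] with u hu
        have hux : 0 ≤ (1 - u) * x := mul_nonneg (sub_nonneg.2 hu.2) hx
        have hD : 0 < d + (1 - u) * x := by positivity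
        refine (hinner _ y hD hy).trans ?_
        rw [← ENNReal.ofReal_mul (by positivity), rpow_neg hD.le (p - l₂), ← one_div, ← mul_assoc]
        have : (d + (1 - u) * x + y) ^ (-l₂) ≤ (d + y) ^ (-l₂) :=
          rpow_le_rpow_of_nonpos (by positivity) (by linarith) (by linarith)
        gcongr
    _ ≤ ENNReal.ofReal (C₂ * (d + y) ^ (-l₂)) *
          ENNReal.ofReal (C₁ * ((d + x) ^ (-l₁) * d ^ (-(p - l₂ - l₁)))) := by
        rw [lintegral_const_mul _ (by fun_prop)]
        gcongr
        exact houter d x hd hx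
    _ = _ := by
        rw [← ENNReal.ofReal_mul (by positivity)]
        ring_nf

/-- The surplus exponent `κ` goes to whichever of `d + x` and `d + y` is larger, since that one is
at least `(d + x + y) / 2`. -/
lemma exists_lintegral_lintegral_piMeasure_one_div_rpow_add_le {ν₁ ν₂ p₁ p₂ κ p : ℝ} (hp₁ : 0 ≤ p₁)
    (hp₂ : 0 ≤ p₂) (hκ : 0 ≤ κ) (hν₁ : p₁ + κ ≤ ν₁ + 1 / 2) (hν₂ : p₂ + κ ≤ ν₂ + 1 / 2)
    (hp : p₁ + p₂ + κ < p) :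
    ∃ C : ℝ, 0 < C ∧ ∀ d x y : ℝ, 0 < d → 0 ≤ x → 0 ≤ y →
      ∫⁻ u, ∫⁻ v, ENNReal.ofReal (1 / (d + (1 - u) * x + (1 - v) * y) ^ p)
          ∂PiMeasure ν₂ ∂PiMeasure ν₁ ≤
        ENNReal.ofReal (C * ((d + x + y) ^ (-κ) *
          ((d + x) ^ (-p₁) * (d + y) ^ (-p₂) * d ^ (-(p - p₁ - p₂ - κ))))) := by
  obtain ⟨A, hA, boundA⟩ := exists_lintegral_lintegral_piMeasure_one_div_rpow_le (ν₂ := ν₂) (p := p)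
    (add_nonneg hp₁ hκ) hp₂ hν₁ (by linarith) (by linarith)
  obtain ⟨B, hB, boundB⟩ := exists_lintegral_lintegral_piMeasure_one_div_rpow_le (ν₁ := ν₁) (p := p)
    hp₁ (add_nonneg hp₂ hκ) (by linarith) hν₂ (by linarith)
  refine ⟨(A + B) * 2 ^ κ, by positivity, fun d x y hd hx hy => ?_⟩
  have rpow_le_of_half_le {z : ℝ} (hz : (d + x + y) / 2 ≤ z) :
      z ^ (-κ) ≤ 2 ^ κ * (d + x + y) ^ (-κ) := by
    calc z ^ (-κ) ≤ ((d + x + y) / 2) ^ (-κ) :=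
          rpow_le_rpow_of_nonpos (by positivity) hz (by linarith)
      _ = 2 ^ κ * (d + x + y) ^ (-κ) := by
          rw [div_rpow (by positivity) zero_le_two, rpow_neg zero_le_two, div_inv_eq_mul, mul_comm]
  rcases le_total y x with hyx | hxy
  · refine (boundA d x y hd hx hy).trans (ENNReal.ofReal_le_ofReal ?_)
    have hκ_le := rpow_le_of_half_le (z := d + x) (by linarith)
    rw [neg_add, rpow_add (by positivity), show p - (p₁ + κ) - p₂ = p - p₁ - p₂ - κ by ring]
    calc _ ≤ (A + B) * ((d + x) ^ (-p₁) * (2 ^ κ * (d + x + y) ^ (-κ)) * (d + y) ^ (-p₂) *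
            d ^ (-(p - p₁ - p₂ - κ))) := by
          gcongr
          exact le_add_of_nonneg_right hB.le
      _ = _ := by ring
  · refine (boundB d x y hd hx hy).trans (ENNReal.ofReal_le_ofReal ?_)
    have hκ_le := rpow_le_of_half_le (z := d + y) (by linarith)
    rw [neg_add, rpow_add (by positivity), show p - p₁ - (p₂ + κ) = p - p₁ - p₂ - κ by ring]
    calc _ ≤ (A + B) * ((d + x) ^ (-p₁) * ((d + y) ^ (-p₂) * (2 ^ κ * (d + x + y) ^ (-κ))) *
            d ^ (-(p - p₁ - p₂ - κ))) := by
          gcongr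
          exact le_add_of_nonneg_left hA.le
      _ = _ := by ring

lemma qfun_eq_add (θ φ u v : ℝ) :
    qfun θ φ u v = qfun θ φ 1 1 + (1 - u) * (sin (θ / 2) * sin (φ / 2)) +
      (1 - v) * (cos (θ / 2) * cos (φ / 2)) := by
  simp only [qfun]
  ring

lemma sq_sub_le_mul_qfun_one_one {θ φ : ℝ} (h : |θ - φ| ≤ 2 * π) :
    (θ - φ) ^ 2 ≤ 2 * π ^ 2 * qfun θ φ 1 1 := by
  have hcos := cos_le_one_sub_mul_cos_sq (x := θ / 2 - φ / 2)
    (by rw [← sub_div, abs_div, abs_two]; linarith)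
  have hq : 2 / π ^ 2 * (θ / 2 - φ / 2) ^ 2 ≤ qfun θ φ 1 1 := by
    rw [cos_sub] at hcos
    simp only [qfun]
    linarith
  calc (θ - φ) ^ 2 = 2 * π ^ 2 * (2 / π ^ 2 * (θ / 2 - φ / 2) ^ 2) := by field_simp
    _ ≤ 2 * π ^ 2 * qfun θ φ 1 1 := by gcongr

lemma sin_half_add_sin_half_sq_le (θ φ : ℝ) :
    (sin (θ / 2) + sin (φ / 2)) ^ 2 ≤ 4 * qfun θ φ 0 1 := by
  simp only [qfun]
  nlinarith [sin_sq_add_cos_sq (θ / 2), sin_sq_add_cos_sq (φ / 2),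
    sq_nonneg (cos (θ / 2) - cos (φ / 2)), sq_nonneg (sin (θ / 2) - sin (φ / 2))]

lemma cos_half_add_cos_half_sq_le (θ φ : ℝ) :
    (cos (θ / 2) + cos (φ / 2)) ^ 2 ≤ 4 * qfun θ φ 1 0 := by
  simp only [qfun]
  nlinarith [sin_sq_add_cos_sq (θ / 2), sin_sq_add_cos_sq (φ / 2),
    sq_nonneg (cos (θ / 2) - cos (φ / 2)), sq_nonneg (sin (θ / 2) - sin (φ / 2))]

lemma sin_half_pos {θ : ℝ} (hθ : θ ∈ Ioo 0 π) : 0 < sin (θ / 2) :=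
  sin_pos_of_pos_of_lt_pi (by linarith [hθ.1]) (by linarith [hθ.1, hθ.2])

lemma cos_half_pos {θ : ℝ} (hθ : θ ∈ Ioo 0 π) : 0 < cos (θ / 2) :=
  cos_pos_of_mem_Ioo ⟨by linarith [hθ.1, hθ.2], by linarith [hθ.2]⟩

lemma abs_sub_le_two_pi {θ φ : ℝ} (hθ : θ ∈ Ioo 0 π) (hφ : φ ∈ Ioo 0 π) : |θ - φ| ≤ 2 * π :=
  abs_le.2 ⟨by linarith [hθ.1, hφ.2, pi_pos], by linarith [hθ.2, hφ.1, pi_pos]⟩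

lemma qfun_one_one_pos {θ φ : ℝ} (hθ : θ ∈ Ioo 0 π) (hφ : φ ∈ Ioo 0 π) (hne : θ ≠ φ) :
    0 < qfun θ φ 1 1 := by
  have hsq : 0 < (θ - φ) ^ 2 := sq_pos_of_ne_zero (sub_ne_zero.2 hne)
  have hle := sq_sub_le_mul_qfun_one_one (abs_sub_le_two_pi hθ hφ)
  exact pos_of_mul_pos_right (hsq.trans_le hle) (by positivity)

lemma exists_lintegral_lintegral_one_div_qfun_rpow_le {ν₁ ν₂ p₁ p₂ κ : ℝ} (hp₁ : 0 ≤ p₁)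
    (hp₂ : 0 ≤ p₂) (hκ : 0 ≤ κ) (hν₁ : p₁ + κ ≤ ν₁ + 1 / 2) (hν₂ : p₂ + κ ≤ ν₂ + 1 / 2) :
    ∃ C : ℝ, 0 < C ∧ ∀ θ ∈ Ioo 0 π, ∀ φ ∈ Ioo 0 π, θ ≠ φ →
      ∫⁻ u, ∫⁻ v, ENNReal.ofReal (1 / qfun θ φ u v ^ (p₁ + p₂ + κ + 1))
          ∂PiMeasure ν₂ ∂PiMeasure ν₁ ≤
        ENNReal.ofReal (C *
          (qfun θ φ 0 1 ^ (-p₁) * qfun θ φ 1 0 ^ (-p₂) * (qfun θ φ 1 1)⁻¹)) := by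
  obtain ⟨C, hC, bound⟩ :=
    exists_lintegral_lintegral_piMeasure_one_div_rpow_add_le hp₁ hp₂ hκ hν₁ hν₂ (lt_add_one _)
  refine ⟨C, hC, fun θ hθ φ hφ hne => ?_⟩
  have hsum : qfun θ φ 1 1 + sin (θ / 2) * sin (φ / 2) + cos (θ / 2) * cos (φ / 2) = 1 := by
    simp only [qfun]
    ring
  have h := bound (qfun θ φ 1 1) _ _ (qfun_one_one_pos hθ hφ hne)
    (mul_pos (sin_half_pos hθ) (sin_half_pos hφ)).le
    (mul_pos (cos_half_pos hθ) (cos_half_pos hφ)).le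
  rw [hsum, one_rpow, one_mul, show -(p₁ + p₂ + κ + 1 - p₁ - p₂ - κ) = -1 by ring,
    rpow_neg_one] at h
  simpa [← qfun_eq_add, qfun_eq_add θ φ 0 1, qfun_eq_add θ φ 1 0] using h

lemma le_pi_mul_sin_half {z : ℝ} (hz : z ∈ Icc 0 π) : z ≤ π * sin (z / 2) := by
  have h := mul_le_sin (x := z / 2) (by linarith [hz.1]) (by linarith [hz.2])
  calc z = π * (2 / π * (z / 2)) := by field_simp
    _ ≤ π * sin (z / 2) := by gcongr

lemma sin_half_le_of_mem_jacobiBall {θ φ z : ℝ} (hθ : θ ∈ Icc 0 π) (hφ : φ ∈ Icc 0 π)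
    (hz : z ∈ jacobiBall θ |θ - φ|) :
    sin (z / 2) ≤ π * (sin (θ / 2) + sin (φ / 2)) := by
  obtain ⟨⟨-, hzr⟩, hz₀, -⟩ := hz
  calc sin (z / 2) ≤ z / 2 := sin_le (by linarith)
    _ ≤ θ + φ := by
        have : |θ - φ| ≤ θ + φ := abs_le.2 ⟨by linarith [hθ.1], by linarith [hφ.1]⟩
        linarith [hφ.1]
    _ ≤ π * (sin (θ / 2) + sin (φ / 2)) := by
        linarith [le_pi_mul_sin_half hθ, le_pi_mul_sin_half hφ]

lemma cos_half_le_of_mem_jacobiBall {θ φ z : ℝ} (hθ : θ ∈ Icc 0 π) (hφ : φ ∈ Icc 0 π)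
    (hz : z ∈ jacobiBall θ |θ - φ|) :
    cos (z / 2) ≤ π * (cos (θ / 2) + cos (φ / 2)) := by
  have hsin (w : ℝ) : sin ((π - w) / 2) = cos (w / 2) := by
    rw [sub_div, sin_pi_div_two_sub]
  obtain ⟨⟨hzl, hzr⟩, hz₀, hzπ⟩ := hz
  have hreflect : π - z ∈ jacobiBall (π - θ) |π - θ - (π - φ)| := by
    rw [sub_sub_sub_cancel_left, abs_sub_comm]
    exact ⟨⟨by linarith, by linarith⟩, by linarith, by linarith⟩
  simpa only [hsin] using sin_half_le_of_mem_jacobiBall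
    ⟨by linarith [hθ.2], by linarith [hθ.1]⟩ ⟨by linarith [hφ.2], by linarith [hφ.1]⟩ hreflect

lemma jacobiMeasure_le_of_forall_mem {α β a b : ℝ} (hα : -(1 / 2) ≤ α) (hβ : -(1 / 2) ≤ β)
    {s : Set ℝ} (hs : MeasurableSet s) (hsπ : s ⊆ Ioo 0 π) (hsin : ∀ z ∈ s, sin (z / 2) ≤ a)
    (hcos : ∀ z ∈ s, cos (z / 2) ≤ b) :
    jacobiMeasure α β s ≤ ENNReal.ofReal (a ^ (2 * α + 1) * b ^ (2 * β + 1)) * volume s := by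
  have hα' : 0 ≤ 2 * α + 1 := by linarith
  have hβ' : 0 ≤ 2 * β + 1 := by linarith
  rw [jacobiMeasure, withDensity_apply _ hs, Measure.restrict_restrict hs,
    inter_eq_left.2 hsπ, ← setLIntegral_const]
  refine setLIntegral_mono' hs fun z hz => ENNReal.ofReal_le_ofReal ?_
  have hsin_nonneg := (sin_half_pos (hsπ hz)).le
  have hcos_nonneg := (cos_half_pos (hsπ hz)).le
  have ha : 0 ≤ a := hsin_nonneg.trans (hsin z hz)
  gcongr
  exacts [hsin z hz, hcos z hz]

lemma exists_jacobiMeasure_jacobiBall_le {α β : ℝ} (hα : -(1 / 2) ≤ α) (hβ : -(1 / 2) ≤ β) :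
    ∃ C : ℝ, 0 < C ∧ ∀ θ ∈ Ioo 0 π, ∀ φ ∈ Ioo 0 π,
      jacobiMeasure α β (jacobiBall θ |θ - φ|) ≤
        ENNReal.ofReal (C * ((sin (θ / 2) + sin (φ / 2)) ^ (2 * α + 1) *
          (cos (θ / 2) + cos (φ / 2)) ^ (2 * β + 1) * |θ - φ|)) := by
  refine ⟨2 * (π ^ (2 * α + 1) * π ^ (2 * β + 1)), by positivity, fun θ hθ φ hφ => ?_⟩
  have hS : 0 < sin (θ / 2) + sin (φ / 2) := add_pos (sin_half_pos hθ) (sin_half_pos hφ)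
  have hT : 0 < cos (θ / 2) + cos (φ / 2) := add_pos (cos_half_pos hθ) (cos_half_pos hφ)
  have hθ' := Ioo_subset_Icc_self hθ
  have hφ' := Ioo_subset_Icc_self hφ
  calc _ ≤ ENNReal.ofReal ((π * (sin (θ / 2) + sin (φ / 2))) ^ (2 * α + 1) *
          (π * (cos (θ / 2) + cos (φ / 2))) ^ (2 * β + 1)) * volume (jacobiBall θ |θ - φ|) :=
        jacobiMeasure_le_of_forall_mem hα hβ (measurableSet_Ioo.inter measurableSet_Ioo)
          inter_subset_right (fun _ => sin_half_le_of_mem_jacobiBall hθ' hφ')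
          (fun _ => cos_half_le_of_mem_jacobiBall hθ' hφ')
    _ ≤ _ * ENNReal.ofReal (2 * |θ - φ|) := by
        gcongr
        exact volume_jacobiBall_le _ _
    _ = _ := by
        rw [← ENNReal.ofReal_mul (by positivity), mul_rpow pi_nonneg hS.le,
          mul_rpow pi_nonneg hT.le]
        ring_nf

lemma rpow_two_mul_mul_rpow_neg_le {z m x p : ℝ} (hz : 0 ≤ z) (hm : 0 ≤ m) (hx : 0 < x)
    (h : z ^ 2 ≤ m * x) (hp : 0 ≤ p) : z ^ (2 * p) * x ^ (-p) ≤ m ^ p := by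
  calc z ^ (2 * p) * x ^ (-p) ≤ (m * x) ^ p * x ^ (-p) := by
        rw [rpow_mul hz, rpow_two]
        gcongr
    _ = m ^ p := by
        rw [mul_rpow hm hx.le, mul_assoc, ← rpow_add hx, add_neg_cancel, rpow_zero, mul_one]

lemma sin_cos_weights_mul_qfun_le {α β γ₁ γ₂ θ φ : ℝ} (hγ₁ : -(1 / 2) ≤ α + γ₁)
    (hγ₂ : -(1 / 2) ≤ β + γ₂) (hθ : θ ∈ Ioo 0 π) (hφ : φ ∈ Ioo 0 π) (hne : θ ≠ φ) :
    (sin (θ / 2) + sin (φ / 2)) ^ (2 * γ₁) * (cos (θ / 2) + cos (φ / 2)) ^ (2 * γ₂) *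
        (qfun θ φ 0 1 ^ (-(α + γ₁ + 1 / 2)) * qfun θ φ 1 0 ^ (-(β + γ₂ + 1 / 2)) *
          (qfun θ φ 1 1)⁻¹) *
        (|θ - φ| * ((sin (θ / 2) + sin (φ / 2)) ^ (2 * α + 1) *
          (cos (θ / 2) + cos (φ / 2)) ^ (2 * β + 1) * |θ - φ|)) ≤
      4 ^ (α + γ₁ + 1 / 2) * 4 ^ (β + γ₂ + 1 / 2) * (2 * π ^ 2) := by
  have hS : 0 < sin (θ / 2) + sin (φ / 2) := add_pos (sin_half_pos hθ) (sin_half_pos hφ)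
  have hT : 0 < cos (θ / 2) + cos (φ / 2) := add_pos (cos_half_pos hθ) (cos_half_pos hφ)
  have hS_sq := sin_half_add_sin_half_sq_le θ φ
  have hT_sq := cos_half_add_cos_half_sq_le θ φ
  have hr_sq : |θ - φ| ^ 2 * (qfun θ φ 1 1)⁻¹ ≤ 2 * π ^ 2 := by
    rw [sq_abs, ← div_eq_mul_inv, div_le_iff₀ (qfun_one_one_pos hθ hφ hne)]
    exact sq_sub_le_mul_qfun_one_one (abs_sub_le_two_pi hθ hφ)
  have hX : 0 < qfun θ φ 0 1 := by linarith [pow_pos hS 2]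
  have hY : 0 < qfun θ φ 1 0 := by linarith [pow_pos hT 2]
  have hS_pow := rpow_two_mul_mul_rpow_neg_le (p := α + γ₁ + 1 / 2) hS.le (by norm_num) hX hS_sq
    (by linarith)
  have hT_pow := rpow_two_mul_mul_rpow_neg_le (p := β + γ₂ + 1 / 2) hT.le (by norm_num) hY hT_sq
    (by linarith)
  rw [show 2 * (α + γ₁ + 1 / 2) = 2 * γ₁ + (2 * α + 1) by ring, rpow_add hS] at hS_pow
  rw [show 2 * (β + γ₂ + 1 / 2) = 2 * γ₂ + (2 * β + 1) by ring, rpow_add hT] at hT_pow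
  have := (qfun_one_one_pos hθ hφ hne).le
  refine le_trans (le_of_eq ?_) (mul_le_mul (mul_le_mul hS_pow hT_pow ?_ ?_) hr_sq ?_ ?_)
  · ring
  all_goals positivity

theorem generalized_double_integral_q_bound_two_general {α β γ₁ γ₂ κ κ₁ κ₂ : ℝ}
    (hα : -(1 / 2) ≤ α) (hβ : -(1 / 2) ≤ β) (hγ₁ : -(1 / 2) ≤ α + γ₁) (hγ₂ : -(1 / 2) ≤ β + γ₂)
    (hκ : 0 ≤ κ) (hκ₁ : 0 ≤ κ₁) (hκ₂ : 0 ≤ κ₂) :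
    ∃ C : ℝ, 0 < C ∧
      ∀ θ ∈ Ioo (0 : ℝ) π, ∀ φ ∈ Ioo (0 : ℝ) π, θ ≠ φ →
        ENNReal.ofReal
            ((sin (θ / 2) + sin (φ / 2)) ^ (2 * γ₁) * (cos (θ / 2) + cos (φ / 2)) ^ (2 * γ₂)) *
          (∫⁻ u, ∫⁻ v, ENNReal.ofReal (1 / qfun θ φ u v ^ (α + β + 2 + γ₁ + γ₂ + κ))
            ∂PiMeasure (β + γ₂ + κ + κ₂) ∂PiMeasure (α + γ₁ + κ + κ₁)) ≤
        ENNReal.ofReal C /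
          (ENNReal.ofReal |θ - φ| * jacobiMeasure α β (jacobiBall θ |θ - φ|)) := by
  obtain ⟨A, hA, hintegral⟩ := exists_lintegral_lintegral_one_div_qfun_rpow_le
    (ν₁ := α + γ₁ + κ + κ₁) (ν₂ := β + γ₂ + κ + κ₂) (p₁ := α + γ₁ + 1 / 2)
    (p₂ := β + γ₂ + 1 / 2) (by linarith) (by linarith) hκ (by linarith) (by linarith)
  obtain ⟨B, hB, hball⟩ := exists_jacobiMeasure_jacobiBall_le hα hβ
  set M : ℝ := 4 ^ (α + γ₁ + 1 / 2) * 4 ^ (β + γ₂ + 1 / 2) * (2 * π ^ 2)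
  have hC : 0 < A * B * M := by positivity
  refine ⟨A * B * M, hC, fun θ hθ φ hφ hne => ?_⟩
  rw [ENNReal.le_div_iff_mul_le (Or.inr (ENNReal.ofReal_pos.2 hC).ne')
    (Or.inr ENNReal.ofReal_ne_top), show α + β + 2 + γ₁ + γ₂ + κ =
      α + γ₁ + 1 / 2 + (β + γ₂ + 1 / 2) + κ + 1 by ring]
  refine (mul_le_mul' (mul_le_mul' le_rfl (hintegral θ hθ φ hφ hne))
    (mul_le_mul' le_rfl (hball θ hθ φ hφ))).trans ?_
  have hS : 0 < sin (θ / 2) + sin (φ / 2) := add_pos (sin_half_pos hθ) (sin_half_pos hφ)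
  have hT : 0 < cos (θ / 2) + cos (φ / 2) := add_pos (cos_half_pos hθ) (cos_half_pos hφ)
  rw [← ENNReal.ofReal_mul (by positivity), ← ENNReal.ofReal_mul (by positivity),
    ← ENNReal.ofReal_mul' (by positivity)]
  refine ENNReal.ofReal_le_ofReal (le_trans (le_of_eq ?_) (mul_le_mul_of_nonneg_left
    (sin_cos_weights_mul_qfun_le hγ₁ hγ₂ hθ hφ hne) (mul_pos hA hB).le))
  ring

/-- second estimate of the generalized Lemma 4.3 (Lemma `L4.3*`). -/
theorem generalized_double_integral_q_bound_two (α β γ₁ γ₂ κ κ₁ κ₂ : ℝ)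
    (hα : -(1 / 2) ≤ α) (hβ : -(1 / 2) ≤ β)
    (hγ₁ : 0 ≤ γ₁) (hγ₂ : 0 ≤ γ₂) (hκ : 0 ≤ κ) (hκ₁ : 0 ≤ κ₁) (hκ₂ : 0 ≤ κ₂) :
    ∃ C : ℝ, 0 < C ∧
      ∀ θ ∈ Ioo (0 : ℝ) π, ∀ φ ∈ Ioo (0 : ℝ) π, θ ≠ φ →
        ENNReal.ofReal
            ((Real.sin (θ / 2) + Real.sin (φ / 2)) ^ (2 * γ₁) *
              (Real.cos (θ / 2) + Real.cos (φ / 2)) ^ (2 * γ₂)) *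
          (∫⁻ u, ∫⁻ v,
              ENNReal.ofReal (1 / qfun θ φ u v ^ (α + β + 2 + γ₁ + γ₂ + κ))
            ∂(PiMeasure (β + γ₂ + κ + κ₂)) ∂(PiMeasure (α + γ₁ + κ + κ₁)))
          ≤ ENNReal.ofReal C /
              (ENNReal.ofReal |θ - φ| * jacobiMeasure α β (jacobiBall θ |θ - φ|)) :=
  generalized_double_integral_q_bound_two_general hα hβ (by linarith) (by linarith) hκ hκ₁ hκ₂
end
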